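/- Let t ≥ 10, let n be sufficiently large in terms of t, and let 0 < p ≤ p_0(t). Let 𝒢 ⊆ 2^[n] be a shifted, inclusion-maximal, 3-wise t-intersecting family in which every member hits the line y = 2x + t, some member hits this line exactly once, and every member that hits the line exactly once hits it at the point (0, t). If [t] ∉ 𝒢, then μ_p(𝒢) < p^t. -/

import Mathlib

/-!
The bound holds as soon as `n ≥ t`. If every member of `𝒢` contains `[t]`, then `𝒢`
omits `[t]` itself from the family of all supersets of `[t]`, which has measure `p ^ t`.

Otherwise some member misses an `i ≤ t`; intersecting it with two members containing `[t]` shows that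
the latter share an element beyond `t`. Hence (`pexpect_cross`) these members have measure at most `p ^ t / 3`,
because `p ≤ 1/3`: three pairwise cross-intersecting families have total measure at most one.

A member not containing `[t]` meets the line at least twice. Let `α` be the probability that the
infinite walk ever climbs one level, where an up step is `+1` and a right step is `-2` relative to
the line; it satisfies `α = p + q α ^ 3`, where `q = 1 - p`. The probability of meeting the line is
`α ^ t`, the walks passing through `(0, t)` account for `p ^ t`, and the probability of a return is
at most `r = p (p + q α) + q α ^ 2`. So these members have measure at most `r (α ^ t - p ^ t)`;
`pexpect_super` and `value_super` express this through a supermartingale. Finally, `p ≤ p₀(t)` gives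
`(t + 2) p ^ 2 ≤ 1 + p`, from which `r (α ^ t - p ^ t) < 2 p ^ t / 3` (`numeric`).
-/

open Finset

/-- The `p`-measure of a family of subsets of `[n] = {1,…,n}`. -/
noncomputable def mu (p : ℝ) (n : ℕ) (𝒢 : Finset (Finset ℕ)) : ℝ :=
  ∑ G ∈ 𝒢, p ^ G.card * (1 - p) ^ (n - G.card)

/-- `𝒢` is a family of subsets of `[n] = {1,…,n}`. -/
def FamilyOn (n : ℕ) (𝒢 : Finset (Finset ℕ)) : Prop :=
  ∀ G ∈ 𝒢, G ⊆ Finset.Icc 1 n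

/-- `𝒢` is 3-wise `t`-intersecting. -/
def Intersecting3 (t : ℕ) (𝒢 : Finset (Finset ℕ)) : Prop :=
  ∀ G₁ ∈ 𝒢, ∀ G₂ ∈ 𝒢, ∀ G₃ ∈ 𝒢, t ≤ (G₁ ∩ G₂ ∩ G₃).card

/-- `𝒢` is shifted (stable under all shifting operations `σ_{i,j}`). -/
def Shifted (n : ℕ) (𝒢 : Finset (Finset ℕ)) : Prop :=
  ∀ i j : ℕ, 1 ≤ i → i < j → j ≤ n → ∀ G ∈ 𝒢, j ∈ G → i ∉ G →
    insert i (G.erase j) ∈ 𝒢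

/-- `𝒢` is inclusion maximal as a family of subsets of `[n]`. -/
def InclMaximal (n : ℕ) (𝒢 : Finset (Finset ℕ)) : Prop :=
  ∀ G ∈ 𝒢, ∀ H : Finset ℕ, G ⊆ H → H ⊆ Finset.Icc 1 n → H ∈ 𝒢

/-- The family `F_s^t = {F ⊆ [n] : |F ∩ [t+3s]| ≥ t+2s}`. -/
def Fst (n t s : ℕ) : Finset (Finset ℕ) :=
  (Finset.Icc 1 n).powerset.filter
    (fun F => t + 2 * s ≤ (F ∩ Finset.Icc 1 (t + 3 * s)).card)

/-- The threshold `p₀(t) = 2/(√(4t+9) − 1)`. -/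
noncomputable def p0 (t : ℕ) : ℝ := 2 / (Real.sqrt (4 * t + 9) - 1)

/-- `α(p) = (√((1+3p)/(1−p)) − 1)/2`. -/
noncomputable def alpha (p : ℝ) : ℝ := (Real.sqrt ((1 + 3 * p) / (1 - p)) - 1) / 2

/-- Two families of subsets of `[n]` are isomorphic: one is the image of the
other under a permutation of `[n]`. -/
def Isom (n : ℕ) (𝒢 𝒢' : Finset (Finset ℕ)) : Prop :=
  ∃ π : Equiv.Perm ℕ, (∀ x ∈ Finset.Icc 1 n, π x ∈ Finset.Icc 1 n) ∧
    𝒢' = 𝒢.image (fun G => G.image π)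

/-- The walk of `G ⊆ [n]` hits the line `y = 2x + c`
(at some step `j ≤ n`, where hitting at step `j` means `3|G∩[j]| = 2j + c`). -/
def HitsLine (n c : ℕ) (G : Finset ℕ) : Prop :=
  ∃ j : ℕ, j ≤ n ∧ 3 * (G ∩ Finset.Icc 1 j).card = 2 * j + c

/-! ### Expectation over subsets of `[n]` -/

/-- The expectation of `f` at a random subset of `[n]` containing each element independently with
probability `p`. -/
noncomputable def pexpect (p : ℝ) (n : ℕ) (f : Finset ℕ → ℝ) : ℝ :=
  ∑ G ∈ (Finset.Icc 1 n).powerset, p ^ G.card * (1 - p) ^ (n - G.card) * f G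

lemma card_le_of_subset_Icc {n : ℕ} {G : Finset ℕ} (h : G ⊆ Finset.Icc 1 n) : G.card ≤ n := by
  simpa using Finset.card_le_card h

lemma succ_notMem_of_subset {n : ℕ} {G : Finset ℕ} (h : G ⊆ Finset.Icc 1 n) : n + 1 ∉ G := by
  intro h'
  have := Finset.mem_Icc.1 (h h')
  omega

lemma pexpect_zero (p : ℝ) (f : Finset ℕ → ℝ) : pexpect p 0 f = f ∅ := by
  simp [pexpect]

lemma pexpect_succ (p : ℝ) (n : ℕ) (f : Finset ℕ → ℝ) :
    pexpect p (n + 1) f =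
      p * pexpect p n (fun G => f (insert (n + 1) G)) + (1 - p) * pexpect p n f := by
  have hI : Finset.Icc 1 (n + 1) = insert (n + 1) (Finset.Icc 1 n) := by
    ext x
    simp only [Finset.mem_Icc, Finset.mem_insert]
    omega
  unfold pexpect
  rw [hI, Finset.sum_powerset_insert (by simp), add_comm, Finset.mul_sum, Finset.mul_sum]
  congr 1
  · refine Finset.sum_congr rfl fun G hG => ?_
    have hG' := Finset.mem_powerset.1 hG
    rw [Finset.card_insert_of_notMem (succ_notMem_of_subset hG')]
    rw [show n + 1 - (G.card + 1) = n - G.card by omega]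
    ring
  · refine Finset.sum_congr rfl fun G hG => ?_
    have hc := card_le_of_subset_Icc (Finset.mem_powerset.1 hG)
    rw [show n + 1 - G.card = (n - G.card) + 1 by omega]
    ring

lemma weight_nonneg {p : ℝ} (hp : 0 ≤ p) (hp1 : p ≤ 1) (n : ℕ) (G : Finset ℕ) :
    0 ≤ p ^ G.card * (1 - p) ^ (n - G.card) :=
  mul_nonneg (pow_nonneg hp _) (pow_nonneg (by linarith) _)

lemma pexpect_mono {p : ℝ} (hp : 0 ≤ p) (hp1 : p ≤ 1) {n : ℕ} {f g : Finset ℕ → ℝ}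
    (h : ∀ G, G ⊆ Finset.Icc 1 n → f G ≤ g G) : pexpect p n f ≤ pexpect p n g :=
  Finset.sum_le_sum fun G hG =>
    mul_le_mul_of_nonneg_left (h G (Finset.mem_powerset.1 hG)) (weight_nonneg hp hp1 n G)

lemma pexpect_add (p : ℝ) (n : ℕ) (f g : Finset ℕ → ℝ) :
    pexpect p n (fun G => f G + g G) = pexpect p n f + pexpect p n g := by
  simp only [pexpect, mul_add, Finset.sum_add_distrib]

lemma pexpect_const_mul (p c : ℝ) (n : ℕ) (f : Finset ℕ → ℝ) :
    pexpect p n (fun G => c * f G) = c * pexpect p n f := by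
  simp only [pexpect, Finset.mul_sum]
  exact Finset.sum_congr rfl fun G _ => by ring

lemma pexpect_eq_top {p : ℝ} {n : ℕ} {f : Finset ℕ → ℝ}
    (h : ∀ G, G ⊆ Finset.Icc 1 n → G ≠ Finset.Icc 1 n → f G = 0) :
    pexpect p n f = p ^ n * f (Finset.Icc 1 n) := by
  unfold pexpect
  rw [Finset.sum_eq_single (Finset.Icc 1 n)]
  · simp
  · intro G hG hne
    rw [h G (Finset.mem_powerset.1 hG) hne, mul_zero]
  · simp

open Classical in
lemma mu_eq_expect {p : ℝ} {n : ℕ} {𝒢 : Finset (Finset ℕ)} (h : FamilyOn n 𝒢) :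
    mu p n 𝒢 = pexpect p n (fun G => if G ∈ 𝒢 then 1 else 0) := by
  have h𝒢 : (Finset.Icc 1 n).powerset.filter (fun G => G ∈ 𝒢) = 𝒢 := by
    ext G
    simp only [Finset.mem_filter, Finset.mem_powerset]
    exact ⟨fun h => h.2, fun hG => ⟨h G hG, hG⟩⟩
  simp only [mu, pexpect, mul_ite, mul_one, mul_zero]
  rw [← Finset.sum_filter, h𝒢]

/-- The supermartingale inequality: if revealing the element `j + 1` does not increase the
conditional expectation of `Φ`, then the final expectation is at most the initial value. -/
lemma pexpect_super {p : ℝ} (hp : 0 ≤ p) (hp1 : p ≤ 1) (Φ : ℕ → Finset ℕ → ℝ)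
    (h : ∀ j G, G ⊆ Finset.Icc 1 j →
      p * Φ (j + 1) (insert (j + 1) G) + (1 - p) * Φ (j + 1) G ≤ Φ j G) (n : ℕ) :
    pexpect p n (Φ n) ≤ Φ 0 ∅ := by
  induction n with
  | zero => rw [pexpect_zero]
  | succ n ih =>
    refine le_trans ?_ ih
    rw [pexpect_succ, ← pexpect_const_mul, ← pexpect_const_mul, ← pexpect_add]
    exact pexpect_mono hp hp1 (h n)

open Classical in
lemma pexpect_superset (p : ℝ) (t n : ℕ) (h : t ≤ n) :
    pexpect p n (fun G => if Finset.Icc 1 t ⊆ G then 1 else 0) = p ^ t := by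
  induction n, h using Nat.le_induction with
  | base =>
    rw [pexpect_eq_top]
    · simp
    · intro G hG hne
      rw [if_neg]
      exact fun h => hne (hG.antisymm h)
  | succ n hn ih =>
    rw [pexpect_succ]
    have h1 : ∀ G : Finset ℕ, Finset.Icc 1 t ⊆ insert (n + 1) G ↔ Finset.Icc 1 t ⊆ G :=
      fun G => Finset.subset_insert_iff_of_notMem (by simp; omega)
    simp only [h1]
    rw [ih]
    ring

/-! ### Cross-intersecting families of supersets of `[t]` -/

/-- On subsets of `[n]`, any set satisfying `P` and any set satisfying `Q` share an element
greater than `t`. -/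
def CrossAbove (t n : ℕ) (P Q : Finset ℕ → Prop) : Prop :=
  ∀ G H, G ⊆ Finset.Icc 1 n → H ⊆ Finset.Icc 1 n → P G → Q H → ∃ x, t < x ∧ x ∈ G ∧ x ∈ H

lemma CrossAbove.restrict {t n : ℕ} {P Q : Finset ℕ → Prop} (h : CrossAbove t (n + 1) P Q) :
    CrossAbove t n P Q := fun G H hG hH =>
  h G H (hG.trans (Finset.Icc_subset_Icc_right n.le_succ))
    (hH.trans (Finset.Icc_subset_Icc_right n.le_succ))

lemma insert_subset_Icc {n : ℕ} {G : Finset ℕ} (hG : G ⊆ Finset.Icc 1 n) :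
    insert (n + 1) G ⊆ Finset.Icc 1 (n + 1) :=
  Finset.insert_subset (by simp) (hG.trans (Finset.Icc_subset_Icc_right n.le_succ))

lemma CrossAbove.insert_left {t n : ℕ} {P Q : Finset ℕ → Prop} (h : CrossAbove t (n + 1) P Q) :
    CrossAbove t n (fun G => P (insert (n + 1) G)) Q := by
  intro G H hG hH hP hQ
  obtain ⟨x, hx, hxG, hxH⟩ := h _ H (insert_subset_Icc hG)
    (hH.trans (Finset.Icc_subset_Icc_right n.le_succ)) hP hQ
  refine ⟨x, hx, ?_, hxH⟩
  rcases Finset.mem_insert.1 hxG with rfl | hx'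
  · exact absurd hxH (succ_notMem_of_subset hH)
  · exact hx'

lemma CrossAbove.symm {t n : ℕ} {P Q : Finset ℕ → Prop} (h : CrossAbove t n P Q) :
    CrossAbove t n Q P := fun G H hG hH hQ hP => by
  obtain ⟨x, h1, h2, h3⟩ := h H G hH hG hP hQ
  exact ⟨x, h1, h3, h2⟩

/-- Three pairwise cross-intersecting families of supersets of `[t]`. The induction on `n`
rewrites the total measure through the sections at `n + 1`, using at most one section of sets
containing `n + 1` at a time; this needs `2 p ≤ 1 - p`. -/
lemma pexpect_cross {p : ℝ} (hp : 0 ≤ p) (hp3 : p ≤ 1 / 3) (t n : ℕ) (h : t ≤ n) :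
    ∀ P Q R : Finset ℕ → Prop,
      [DecidablePred P] → [DecidablePred Q] → [DecidablePred R] →
      (∀ G, P G → Finset.Icc 1 t ⊆ G) → (∀ G, Q G → Finset.Icc 1 t ⊆ G) →
      (∀ G, R G → Finset.Icc 1 t ⊆ G) →
      CrossAbove t n P Q → CrossAbove t n Q R → CrossAbove t n P R →
      pexpect p n (fun G => if P G then 1 else 0) + pexpect p n (fun G => if Q G then 1 else 0)
        + pexpect p n (fun G => if R G then 1 else 0) ≤ p ^ t := by
  induction n, h using Nat.le_induction with
  | base =>
    intro P Q R _ _ _ hP hQ hR hPQ hQR hPR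
    have key : ∀ S : Finset ℕ → Prop, [DecidablePred S] → (∀ G, S G → Finset.Icc 1 t ⊆ G) →
        pexpect p t (fun G => if S G then 1 else 0)
          = p ^ t * (if S (Finset.Icc 1 t) then 1 else 0) := by
      intro S _ hS
      refine pexpect_eq_top fun G hG hne => if_neg fun h => hne (hG.antisymm (hS G h))
    have no : ∀ S T : Finset ℕ → Prop, CrossAbove t t S T →
        S (Finset.Icc 1 t) → T (Finset.Icc 1 t) → False := by
      intro S T hST h1 h2
      obtain ⟨x, hx, hx', -⟩ := hST _ _ subset_rfl subset_rfl h1 h2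
      exact absurd (Finset.mem_Icc.1 hx').2 (by omega)
    rw [key P hP, key Q hQ, key R hR]
    have h1 := no P Q hPQ
    have h2 := no Q R hQR
    have h3 := no P R hPR
    have h0 : 0 ≤ p ^ t := pow_nonneg hp t
    split_ifs <;> first | (exfalso; tauto) | linarith
  | succ n hn ih =>
    intro P Q R _ _ _ hP hQ hR hPQ hQR hPR
    have sec : ∀ S : Finset ℕ → Prop, (∀ G, S G → Finset.Icc 1 t ⊆ G) →
        ∀ G, S (insert (n + 1) G) → Finset.Icc 1 t ⊆ G := fun S hS G hG =>
      (Finset.subset_insert_iff_of_notMem (by simp; omega)).1 (hS _ hG)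
    have e1 := ih (fun G => P (insert (n + 1) G)) Q R (sec P hP) hQ hR
      hPQ.insert_left hQR.restrict hPR.insert_left
    have e2 := ih P (fun G => Q (insert (n + 1) G)) R hP (sec Q hQ) hR
      hPQ.symm.insert_left.symm hQR.insert_left hPR.restrict
    have e3 := ih P Q (fun G => R (insert (n + 1) G)) hP hQ (sec R hR)
      hPQ.restrict hQR.symm.insert_left.symm hPR.symm.insert_left.symm
    have e4 := ih P Q R hP hQ hR hPQ.restrict hQR.restrict hPR.restrict
    rw [pexpect_succ, pexpect_succ, pexpect_succ]
    nlinarith [mul_le_mul_of_nonneg_left e1 hp, mul_le_mul_of_nonneg_left e2 hp,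
      mul_le_mul_of_nonneg_left e3 hp,
      mul_le_mul_of_nonneg_left e4 (show 0 ≤ 1 - 3 * p by linarith)]

/-! ### Walks meeting the line twice -/

/-- An upper bound for the return probability to the line: after a right step the walk must climb
two levels, after an up and a right step one level, and after two up steps the bound is `1`. -/
noncomputable def ret (p α : ℝ) : ℝ := p * (p + (1 - p) * α) + (1 - p) * α ^ 2

/-- An upper bound for the probability that a walk which has met the line `N` times and is now at
level `L` relative to it will meet it at least twice in total. The case `N = 0`, `0 ≤ L` does not
occur, and is given the trivial bound. -/
noncomputable def value (p α : ℝ) (N : ℕ) (L : ℤ) : ℝ :=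
  if N = 0 then (if L < 0 then ret p α * α ^ (-L).toNat else 1)
  else if N = 1 then
    (if L < 0 then α ^ (-L).toNat else if L = 0 then ret p α
      else if L = 1 then p + (1 - p) * α else 1)
  else 1

/-- The numerical facts about `p` and `α` used by the walk estimates. -/
structure Params (p α : ℝ) : Prop where
  p_pos : 0 < p
  p_le : p ≤ 1 / 3
  a_pos : 0 < α
  a_le : α ≤ 1
  quad : (1 - p) * α ^ 2 + (1 - p) * α = p

namespace Params

variable {p α : ℝ}

lemma cubic (h : Params p α) : p + (1 - p) * α ^ 3 = α := by
  linear_combination (α - 1) * h.quad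

lemma ret_nonneg (h : Params p α) : 0 ≤ ret p α := by
  have := h.p_pos
  have := h.a_pos
  have : 0 < 1 - p := by linarith [h.p_le]
  unfold ret
  positivity

lemma ret_le_one (h : Params p α) : ret p α ≤ 1 := by
  have h1 := h.p_pos
  have h2 := h.a_pos
  have h3 := h.p_le
  have h4 := h.a_le
  have h5 : α ^ 2 ≤ 1 := by nlinarith
  unfold ret
  nlinarith [mul_le_mul_of_nonneg_left h5 (show 0 ≤ 1 - p by linarith),
    mul_le_mul_of_nonneg_left h4 (show 0 ≤ p * (1 - p) by nlinarith)]

lemma climb (h : Params p α) (k : ℕ) : p * α ^ k + (1 - p) * α ^ (k + 3) = α ^ (k + 1) := by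
  linear_combination α ^ k * h.cubic

lemma value_nonneg (h : Params p α) (N : ℕ) (L : ℤ) : 0 ≤ value p α N L := by
  have h1 := h.ret_nonneg
  have h2 := h.p_pos
  have h3 := h.a_pos
  have h4 : 0 < 1 - p := by linarith [h.p_le]
  unfold value
  split_ifs <;> positivity

lemma value_le_one (h : Params p α) (N : ℕ) (L : ℤ) : value p α N L ≤ 1 := by
  have h1 := h.ret_le_one
  have h3 : α ^ (-L).toNat ≤ 1 := pow_le_one₀ h.a_pos.le h.a_le
  have h3' : 0 ≤ α ^ (-L).toNat := pow_nonneg h.a_pos.le _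
  have h4 : 0 < 1 - p := by linarith [h.p_le]
  unfold value
  split_ifs <;> first | assumption | exact le_rfl | nlinarith [h.a_le, h.ret_nonneg]

lemma value_super (h : Params p α) (N : ℕ) (L : ℤ) :
    p * value p α (N + if L + 1 = 0 then 1 else 0) (L + 1)
      + (1 - p) * value p α (N + if L - 2 = 0 then 1 else 0) (L - 2) ≤ value p α N L := by
  have hp := h.p_pos
  have hq : 0 < 1 - p := by linarith [h.p_le]
  have triv : value p α N L = 1 → p * value p α (N + if L + 1 = 0 then 1 else 0) (L + 1)
      + (1 - p) * value p α (N + if L - 2 = 0 then 1 else 0) (L - 2) ≤ value p α N L := by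
    intro h1
    rw [h1]
    nlinarith [h.value_le_one (N + if L + 1 = 0 then 1 else 0) (L + 1),
      h.value_le_one (N + if L - 2 = 0 then 1 else 0) (L - 2)]
  have neg : ∀ k : ℕ, (-(-(k + 1 : ℤ))).toNat = k + 1 := fun k => by omega
  have neg2 : ∀ k : ℕ, (-(-(k + 1 : ℤ) - 2)).toNat = k + 3 := fun k => by omega
  have neg1 : ∀ k : ℕ, (-(-(k + 1 : ℤ) + 1)).toNat = k := fun k => by omega
  rcases lt_or_ge L 0 with hL | hL
  · obtain ⟨k, rfl⟩ : ∃ k : ℕ, L = -(k + 1 : ℤ) := ⟨(-L - 1).toNat, by omega⟩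
    have c := h.climb k
    have hn : ¬ (-(k + 1 : ℤ) - 2 = 0) := by omega
    have hl2 : -(k + 1 : ℤ) - 2 < 0 := by omega
    rcases N with _ | _ | N
    · rcases k with _ | k
      · simp [value] at c ⊢
        nlinarith [h.ret_nonneg]
      · have hn1 : ¬ (-((k + 1 : ℕ) + 1 : ℤ) + 1 = 0) := by omega
        have hl1 : -((k + 1 : ℕ) + 1 : ℤ) + 1 < 0 := by omega
        rw [if_neg hn1, if_neg hn]
        unfold value
        rw [if_pos rfl, if_pos rfl, if_pos rfl, if_pos hl1, if_pos hl2, if_pos hL, neg, neg1, neg2]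
        rw [← c]
        exact le_of_eq (by ring)
    · rcases k with _ | k
      · simp [value] at c ⊢
        linarith
      · have hn1 : ¬ (-((k + 1 : ℕ) + 1 : ℤ) + 1 = 0) := by omega
        have hl1 : -((k + 1 : ℕ) + 1 : ℤ) + 1 < 0 := by omega
        rw [if_neg hn1, if_neg hn]
        have e : ∀ L : ℤ, L < 0 → value p α 1 L = α ^ (-L).toNat := fun L hL => by
          simp [value, hL]
        simp only [zero_add, add_zero]
        rw [e _ hl1, e _ hl2, e _ hL, neg, neg1, neg2]
        exact c.le
    · exact triv (by simp [value])
  · rcases N with _ | _ | N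
    · exact triv (by simp [value, hL.not_gt])
    · rcases (show L = 0 ∨ L = 1 ∨ 2 ≤ L by omega) with rfl | rfl | h2
      · simp [value, ret]
      · simp [value]
      · exact triv (by
          simp [value, hL.not_gt, show L ≠ 0 by omega, show L ≠ 1 by omega])
    · exact triv (by simp [value])

end Params

/-- The number of times the walk of `G` meets the line `y = 2x + t` within its first `j` steps. -/
def hits (t j : ℕ) (G : Finset ℕ) : ℕ :=
  ((Finset.range (j + 1)).filter
    (fun i => 3 * (G ∩ Finset.Icc 1 i).card = 2 * i + t)).card

lemma hits_succ (t j : ℕ) (G : Finset ℕ) : hits t (j + 1) G = hits t j G +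
    if 3 * (G ∩ Finset.Icc 1 (j + 1)).card = 2 * (j + 1) + t then 1 else 0 := by
  unfold hits
  rw [Finset.range_add_one (n := j + 1), Finset.filter_insert]
  split_ifs
  · rw [Finset.card_insert_of_notMem (by simp)]
  · simp

lemma hits_insert (t j : ℕ) (G : Finset ℕ) : hits t j (insert (j + 1) G) = hits t j G := by
  unfold hits
  congr 1
  refine Finset.filter_congr fun i hi => ?_
  rw [Finset.insert_inter_of_notMem]
  have := Finset.mem_range.1 hi
  simp only [Finset.mem_Icc]
  omega

lemma hits_eq_zero {t j : ℕ} (h : j < t) (G : Finset ℕ) : hits t j G = 0 := by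
  unfold hits
  rw [Finset.card_eq_zero, Finset.filter_eq_empty_iff]
  intro i hi hc
  have h1 := Finset.mem_range.1 hi
  have h2 := card_le_of_subset_Icc (Finset.inter_subset_right (s₁ := G) (s₂ := Finset.Icc 1 i))
  omega

open Classical in
/-- The supermartingale bounding the probability that the walk of `G` meets the line at least twice
without passing through `(0, t)`, given its first `j` steps. In the first branch all steps so far
(up to step `t`) are up; its value is `0` from step `t` on. -/
noncomputable def potential (p α : ℝ) (t j : ℕ) (G : Finset ℕ) : ℝ :=
  if Finset.Icc 1 (min j t) ⊆ G then ret p α * (α ^ (t - j) - p ^ (t - j))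
  else value p α (hits t j G) (3 * G.card - 2 * j - t)

lemma potential_super {p α : ℝ} (h : Params p α) (t j : ℕ) (G : Finset ℕ)
    (hG : G ⊆ Finset.Icc 1 j) :
    p * potential p α t (j + 1) (insert (j + 1) G) + (1 - p) * potential p α t (j + 1) G
      ≤ potential p α t j G := by
  have hn := succ_notMem_of_subset hG
  have hGi : G ∩ Finset.Icc 1 (j + 1) = G :=
    Finset.inter_eq_left.2 (hG.trans (Finset.Icc_subset_Icc_right j.le_succ))
  have hGi' : insert (j + 1) G ∩ Finset.Icc 1 (j + 1) = insert (j + 1) G :=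
    Finset.inter_eq_left.2 (insert_subset_Icc hG)
  have hcI : (insert (j + 1) G).card = G.card + 1 := Finset.card_insert_of_notMem hn
  have hits1 : hits t (j + 1) (insert (j + 1) G) = hits t j G +
      if (3 * G.card - 2 * j - t : ℤ) + 1 = 0 then 1 else 0 := by
    rw [hits_succ, hits_insert, hGi', hcI]
    congr 1
    refine if_congr ?_ rfl rfl
    omega
  have hits0 : hits t (j + 1) G = hits t j G +
      if (3 * G.card - 2 * j - t : ℤ) - 2 = 0 then 1 else 0 := by
    rw [hits_succ, hGi]
    congr 1
    refine if_congr ?_ rfl rfl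
    omega
  by_cases hF : Finset.Icc 1 (min j t) ⊆ G
  · rcases lt_or_ge j t with hj | hj
    · have hGj : G = Finset.Icc 1 j := by
        rw [min_eq_left hj.le] at hF
        exact hG.antisymm hF
      have hc : G.card = j := by rw [hGj]; simp
      have f1 : Finset.Icc 1 (min (j + 1) t) ⊆ insert (j + 1) G := by
        rw [min_eq_left hj, hGj]
        intro x
        simp only [Finset.mem_Icc, Finset.mem_insert]
        omega
      have f0 : ¬ Finset.Icc 1 (min (j + 1) t) ⊆ G := by
        rw [min_eq_left hj]
        exact fun h' => hn (h' (by simp))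
      unfold potential
      rw [if_pos f1, if_neg f0, if_pos hF, hits0, hits_eq_zero hj, hc]
      obtain ⟨k, rfl⟩ : ∃ k, t = j + 1 + k := ⟨t - (j + 1), by omega⟩
      rw [show j + 1 + k - (j + 1) = k by omega, show j + 1 + k - j = k + 1 by omega]
      rw [if_neg (by push_cast; omega)]
      unfold value
      rw [if_pos rfl, if_pos (by push_cast; omega)]
      rw [show (-(3 * (j : ℤ) - 2 * ((j + 1 : ℕ) : ℤ) - ((j + 1 + k : ℕ) : ℤ))).toNat = k + 3 by
        push_cast; omega]
      rw [← h.climb k]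
      exact le_of_eq (by ring)
    · rw [min_eq_right hj] at hF
      unfold potential
      rw [min_eq_right (by omega : t ≤ j + 1), min_eq_right hj, if_pos hF,
        if_pos (hF.trans (Finset.subset_insert _ _)), if_pos hF]
      simp [show t - (j + 1) = 0 by omega, show t - j = 0 by omega]
  · have hmono : Finset.Icc 1 (min j t) ⊆ Finset.Icc 1 (min (j + 1) t) :=
      Finset.Icc_subset_Icc_right (by omega)
    have f0 : ¬ Finset.Icc 1 (min (j + 1) t) ⊆ G := fun h' => hF (hmono.trans h')
    have f1 : ¬ Finset.Icc 1 (min (j + 1) t) ⊆ insert (j + 1) G := fun h' =>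
      hF ((Finset.subset_insert_iff_of_notMem (by simp)).1 (hmono.trans h'))
    unfold potential
    rw [if_neg f0, if_neg f1, if_neg hF, hits1, hits0, hcI]
    have := h.value_super (hits t j G) (3 * G.card - 2 * j - t)
    convert this using 4 <;> (push_cast; ring)

open Classical in
lemma pexpect_two_hits {p α : ℝ} (h : Params p α) (t n : ℕ) (hn : t ≤ n) :
    pexpect p n (fun G => if ¬ Finset.Icc 1 t ⊆ G ∧ 2 ≤ hits t n G then 1 else 0)
      ≤ ret p α * (α ^ t - p ^ t) := by
  have hp := h.p_pos
  have hp1 : p ≤ 1 := by linarith [h.p_le]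
  have h0 : potential p α t 0 ∅ = ret p α * (α ^ t - p ^ t) := by simp [potential]
  rw [← h0]
  refine le_trans (pexpect_mono hp.le hp1 fun G _ => ?_)
    (pexpect_super hp.le hp1 (potential p α t) (potential_super h t) n)
  unfold potential
  rw [min_eq_right hn]
  by_cases hF : Finset.Icc 1 t ⊆ G
  · simp [hF, show t - n = 0 by omega]
  · by_cases hh : 2 ≤ hits t n G
    · rw [if_pos ⟨hF, hh⟩, if_neg hF]
      simp [value, show hits t n G ≠ 0 by omega, show hits t n G ≠ 1 by omega]
    · rw [if_neg (fun h => hh h.2), if_neg hF]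
      exact h.value_nonneg _ _

/-! ### Numerical estimates -/

lemma params_alpha {p : ℝ} (hp : 0 < p) (hp3 : p ≤ 1 / 3) : Params p (alpha p) := by
  have hq : 0 < 1 - p := by linarith
  have hs : 0 ≤ (1 + 3 * p) / (1 - p) := by positivity
  have hsq := Real.sq_sqrt hs
  set s := Real.sqrt ((1 + 3 * p) / (1 - p)) with hsdef
  have hs1 : 1 < s := by
    rw [hsdef, Real.lt_sqrt (by norm_num), lt_div_iff₀ hq]
    linarith
  have hs3 : s ≤ 3 := by
    rw [hsdef, Real.sqrt_le_left (by norm_num), div_le_iff₀ hq]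
    linarith
  have hsq' : (1 - p) * s ^ 2 = 1 + 3 * p := by
    rw [hsq]
    field_simp
  have ha : alpha p = (s - 1) / 2 := rfl
  refine ⟨hp, hp3, ?_, ?_, ?_⟩
  · rw [ha]; linarith
  · rw [ha]; linarith
  · rw [ha]; linear_combination hsq' / 4

/-- The threshold `p₀(t)` is the positive root of `(t + 2) p ^ 2 = 1 + p`. -/
lemma p0_bounds {t : ℕ} (ht : 10 ≤ t) {p : ℝ} (hp : 0 < p) (h : p ≤ p0 t) :
    p ≤ 1 / 3 ∧ (t + 2) * p ^ 2 ≤ 1 + p := by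
  have ht' : (10 : ℝ) ≤ t := by exact_mod_cast ht
  have hsq := Real.sq_sqrt (show (0 : ℝ) ≤ 4 * t + 9 by linarith)
  unfold p0 at h
  set s := Real.sqrt (4 * t + 9) with hsdef
  have hs7 : 7 ≤ s := by
    rw [hsdef]
    exact Real.le_sqrt_of_sq_le (by linarith)
  rw [le_div_iff₀ (by linarith)] at h
  refine ⟨by nlinarith, ?_⟩
  have h2 : (p * s) ^ 2 ≤ (2 + p) ^ 2 :=
    pow_le_pow_left₀ (by positivity) (by linarith) 2
  rw [mul_pow, hsq] at h2
  nlinarith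

/-- With `x = (1 - p) α ^ 2` one has `p = α (1 - x)`, so `(α / p) ^ t ≤ exp (t x / (1 - x))`; the
bound `x ≤ p ^ 2 (1 - p (1 - p) ^ 2)` makes the exponent at most `10 / 9`. -/
lemma numeric {t : ℕ} {p α : ℝ} (h : Params p α) (ht : (t + 2) * p ^ 2 ≤ 1 + p) :
    ret p α * (α ^ t - p ^ t) < 2 / 3 * p ^ t := by
  have hp := h.p_pos
  have hp3 := h.p_le
  have ha := h.a_pos
  have hq : 0 < 1 - p := by linarith
  have hcub := h.cubic
  have hquad := h.quad
  have hap : p ≤ α := by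
    have : 0 ≤ (1 - p) * α ^ 3 := by positivity
    linarith
  have hap' : p + (1 - p) * p ^ 3 ≤ α := by
    have : (1 - p) * p ^ 3 ≤ (1 - p) * α ^ 3 := by gcongr
    linarith
  obtain ⟨x, hx⟩ : ∃ x, x = (1 - p) * α ^ 2 := ⟨_, rfl⟩
  have hx0 : 0 < x := by rw [hx]; positivity
  have hx1 : x ≤ p ^ 2 - (1 - p) ^ 2 * p ^ 3 := by
    nlinarith [mul_le_mul_of_nonneg_left hap' hq.le]
  have hx2 : x ≤ p ^ 2 := by
    have : 0 ≤ (1 - p) ^ 2 * p ^ 3 := by positivity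
    linarith
  have hpp : p ^ 2 ≤ 1 / 9 := by nlinarith
  have h1x : 0 < 1 - x := by linarith
  have hpx : α * (1 - x) = p := by rw [hx]; linear_combination -hcub
  have hret : ret p α ≤ 8 / 27 := by
    have e : ret p α = x * (1 - p) + 2 * p ^ 2 := by
      unfold ret
      rw [hx]
      linear_combination p * hquad
    rw [e]
    nlinarith [mul_le_mul_of_nonneg_right hx2 hq.le]
  -- The exponent is at most `1 + p ^ 3 (3 - 2 p) / (1 + p)`.
  have hexp : t * (x / (1 - x)) ≤ 10 / 9 := by
    rw [← mul_div_assoc, div_le_iff₀ h1x]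
    have ht0 : (0 : ℝ) ≤ t := Nat.cast_nonneg t
    have a1 : (t : ℝ) * x ≤ t * p ^ 2 * (1 - (1 - p) ^ 2 * p) := by
      nlinarith [mul_le_mul_of_nonneg_left hx1 ht0]
    have hc0 : 0 ≤ 1 - (1 - p) ^ 2 * p := by nlinarith [mul_nonneg hp.le hp.le]
    have a2 : (t : ℝ) * p ^ 2 * (1 - (1 - p) ^ 2 * p)
        ≤ (1 + p - 2 * p ^ 2) * (1 - (1 - p) ^ 2 * p) :=
      mul_le_mul_of_nonneg_right (by linarith) hc0
    have a3 : (1 + p - 2 * p ^ 2) * (1 - (1 - p) ^ 2 * p)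
        = (1 - p) * (1 + p + 3 * p ^ 3 - 2 * p ^ 4) := by ring
    have a4 : 1 + p + 3 * p ^ 3 - 2 * p ^ 4 ≤ 10 / 9 * (1 + p) := by
      have : p ^ 3 ≤ 1 / 27 := by nlinarith
      have : 0 ≤ p ^ 4 := by positivity
      linarith
    have a5 := mul_le_mul_of_nonneg_left a4 hq.le
    nlinarith
  have hratio : α ≤ p * Real.exp (x / (1 - x)) := by
    have e : 1 / (1 - x) = x / (1 - x) + 1 := by field_simp; ring
    have : 1 / (1 - x) ≤ Real.exp (x / (1 - x)) := e ▸ Real.add_one_le_exp _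
    calc α = p * (1 / (1 - x)) := by rw [← hpx]; field_simp
      _ ≤ _ := by gcongr
  have hE : Real.exp (10 / 9) ≤ 13 / 4 - 1 / 10 := by
    have e1 : Real.exp (1 / 9) ≤ 9 / 8 := by
      have := Real.add_one_le_exp (-(1 / 9) : ℝ)
      rw [Real.exp_neg] at this
      have h8 : (8 / 9 : ℝ) ≤ (Real.exp (1 / 9))⁻¹ := by linarith
      rw [le_inv_comm₀ (by norm_num) (Real.exp_pos _)] at h8
      linarith
    have e2 := Real.exp_one_lt_d9
    rw [show (10 / 9 : ℝ) = 1 + 1 / 9 by norm_num, Real.exp_add]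
    calc Real.exp 1 * Real.exp (1 / 9) ≤ 2.7182818286 * (9 / 8) :=
          mul_le_mul e2.le e1 (Real.exp_pos _).le (by norm_num)
      _ ≤ 13 / 4 - 1 / 10 := by norm_num
  have hpow : α ^ t ≤ p ^ t * (13 / 4 - 1 / 10) := by
    calc α ^ t ≤ (p * Real.exp (x / (1 - x))) ^ t := pow_le_pow_left₀ ha.le hratio t
      _ = p ^ t * Real.exp (t * (x / (1 - x))) := by rw [mul_pow, Real.exp_nat_mul]
      _ ≤ p ^ t * Real.exp (10 / 9) := by gcongr
      _ ≤ _ := by gcongr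
  have hpt : 0 < p ^ t := by positivity
  have hdiff : 0 ≤ α ^ t - p ^ t := sub_nonneg.2 (pow_le_pow_left₀ hp.le hap t)
  nlinarith [mul_le_mul_of_nonneg_right hret hdiff]

/-! ### Assembly -/

/-- A member meeting the line, but not exactly once, meets it at least twice. -/
lemma two_le_hits {n t : ℕ} {G : Finset ℕ} (h : HitsLine n t G)
    (h1 : ¬ ∃! j : ℕ, j ≤ n ∧ 3 * (G ∩ Finset.Icc 1 j).card = 2 * j + t) : 2 ≤ hits t n G := by
  obtain ⟨j, hj⟩ := h
  have : ∃ i, (i ≤ n ∧ 3 * (G ∩ Finset.Icc 1 i).card = 2 * i + t) ∧ i ≠ j := by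
    by_contra! hcon
    exact h1 ⟨j, hj, hcon⟩
  obtain ⟨i, hi, hij⟩ := this
  unfold hits
  refine Finset.one_lt_card.2 ⟨i, ?_, j, ?_, hij⟩
  · simp only [Finset.mem_filter, Finset.mem_range]
    exact ⟨by omega, hi.2⟩
  · simp only [Finset.mem_filter, Finset.mem_range]
    exact ⟨by omega, hj.2⟩

/-- If some member misses an element of `[t]`, then two members containing `[t]` meet beyond `t`. -/
lemma cross_of_intersecting {n t : ℕ} {𝒢 : Finset (Finset ℕ)}
    (hI : Intersecting3 t 𝒢) {K : Finset ℕ} (hK : K ∈ 𝒢) (hKt : ¬ Finset.Icc 1 t ⊆ K) :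
    CrossAbove t n (fun G => G ∈ 𝒢 ∧ Finset.Icc 1 t ⊆ G)
      (fun G => G ∈ 𝒢 ∧ Finset.Icc 1 t ⊆ G) := by
  intro G H hG hH hG' hH'
  by_contra! hcon
  obtain ⟨i, hit, hiK⟩ := Finset.not_subset.1 hKt
  have hsub : G ∩ H ∩ K ⊆ (Finset.Icc 1 t).erase i := by
    intro x hx
    simp only [Finset.mem_inter] at hx
    have h1 := (Finset.mem_Icc.1 (hG hx.1.1)).1
    have h2 : x ≤ t := by
      by_contra hlt
      exact hcon x (by omega) hx.1.1 hx.1.2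
    exact Finset.mem_erase.2 ⟨fun h => hiK (h ▸ hx.2), Finset.mem_Icc.2 ⟨h1, h2⟩⟩
  have h1 := Finset.card_le_card hsub
  rw [Finset.card_erase_of_mem hit, Nat.card_Icc] at h1
  have h2 := hI G hG'.1 H hH'.1 K hK
  have := Finset.mem_Icc.1 hit
  omega

/-- Claim (case `s = 0`): for `t ≥ 10`, `n` sufficiently large and
`0 < p ≤ p₀(t)`: if `𝒢` is a shifted, inclusion-maximal, 3-wise
`t`-intersecting family in which every member hits the line `y = 2x + t`,
some member hits it exactly once, every member hitting it exactly once hits it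
at `(0, t)`, and `[t] ∉ 𝒢`, then `μ_p(𝒢) < p^t`. -/
theorem claim_s0 (t : ℕ) (ht : 10 ≤ t) :
    ∃ n₀ : ℕ, ∀ n : ℕ, n₀ ≤ n → ∀ p : ℝ, 0 < p → p ≤ p0 t →
      ∀ 𝒢 : Finset (Finset ℕ), FamilyOn n 𝒢 → Shifted n 𝒢 →
        InclMaximal n 𝒢 → Intersecting3 t 𝒢 →
        (∀ G ∈ 𝒢, HitsLine n t G) →
        (∃ G ∈ 𝒢, ∃! j : ℕ,
          j ≤ n ∧ 3 * (G ∩ Finset.Icc 1 j).card = 2 * j + t) →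
        (∀ G ∈ 𝒢,
          (∃! j : ℕ, j ≤ n ∧ 3 * (G ∩ Finset.Icc 1 j).card = 2 * j + t) →
          (G ∩ Finset.Icc 1 t).card = t) →
        Finset.Icc 1 t ∉ 𝒢 →
        mu p n 𝒢 < p ^ t := by
  classical
  refine ⟨t, fun n hn p hp hpt 𝒢 hF _ _ hI hHit _ hOnce ht𝒢 => ?_⟩
  obtain ⟨hp3, hpt2⟩ := p0_bounds ht hp hpt
  have hp1 : p ≤ 1 := by linarith
  have hpos : 0 < p ^ t := by positivity
  by_cases hall : ∀ G ∈ 𝒢, Finset.Icc 1 t ⊆ G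
  · rw [mu_eq_expect hF, ← pexpect_superset p t n hn]
    unfold pexpect
    refine Finset.sum_lt_sum (fun G _ => ?_) ⟨Finset.Icc 1 t, ?_, ?_⟩
    · refine mul_le_mul_of_nonneg_left ?_ (weight_nonneg hp.le hp1 n G)
      beta_reduce
      by_cases hG : G ∈ 𝒢
      · rw [if_pos hG, if_pos (hall G hG)]
      · rw [if_neg hG]
        split_ifs <;> norm_num
    · exact Finset.mem_powerset.2 (Finset.Icc_subset_Icc_right hn)
    · beta_reduce
      rw [if_neg ht𝒢, if_pos subset_rfl]
      have : 0 < 1 - p := by linarith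
      simp only [mul_zero, mul_one]
      positivity
  · push Not at hall
    obtain ⟨K, hK, hKt⟩ := hall
    have hc := cross_of_intersecting (n := n) hI hK hKt
    have h1 := pexpect_cross hp.le hp3 t n hn _ _ _ (fun G h => h.2) (fun G h => h.2)
      (fun G h => h.2) hc hc hc
    have hpar := params_alpha hp hp3
    have h2 := pexpect_two_hits hpar t n hn
    have h3 := numeric hpar hpt2
    have hle : mu p n 𝒢 ≤
        pexpect p n (fun G => if G ∈ 𝒢 ∧ Finset.Icc 1 t ⊆ G then 1 else 0)
        + pexpect p n (fun G => if ¬ Finset.Icc 1 t ⊆ G ∧ 2 ≤ hits t n G then 1 else 0) := by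
      rw [mu_eq_expect hF, ← pexpect_add]
      refine pexpect_mono hp.le hp1 fun G _ => ?_
      by_cases hG : G ∈ 𝒢
      · by_cases hGt : Finset.Icc 1 t ⊆ G
        · simp [hG, hGt]
        · have hh : 2 ≤ hits t n G := by
            refine two_le_hits (hHit G hG) fun hu => hGt ?_
            have hcard := hOnce G hG hu
            have : G ∩ Finset.Icc 1 t = Finset.Icc 1 t :=
              Finset.eq_of_subset_of_card_le Finset.inter_subset_right (by simp [hcard])
            exact Finset.inter_eq_right.1 this
          simp [hG, hGt, hh]
      · rw [if_neg hG]
        split_ifs <;> norm_num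
    linarith
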